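/- arXiv:2510.07605 — 2 statements merged into one kernel-verified Lean document; each statement's English description precedes it below -/
import Mathlib

section
/- Let α ∈ (0,1) and let D ∈ M_n(ℂ) be positive semidefinite with tr D = 1. Then tr(D^α) equals the minimum, over all finite resolutions of identity (p_1,…,p_k) in M_n(ℂ), of Σ_{i=1}^k (tr(p_i D))^α · (tr(p_i))^{1−α}. Consequently, the Rényi entropy R_α := (1/(α−1)) log tr(D^α) satisfies R_α = (1/(α−1)) · min over such resolutions of log Σ_{i=1}^k (tr(p_i D))^α (tr(p_i))^{1−α}. -/
open scoped Matrix ComplexOrder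

/-!
In an eigenbasis of `D`, the diagonal entries `w i j = (p i) j j` of a resolution of identity are
nonnegative with `∑ i, w i j = 1`, while `tr (p i) = ∑ j, w i j` and
`tr (p i * D) = ∑ j, w i j * λ j`. Hölder's inequality with exponents `α⁻¹` and `(1 - α)⁻¹` gives
`∑ j, w i j * λ j ^ α ≤ tr (p i * D) ^ α * tr (p i) ^ (1 - α)`, and summing over `i` yields
`tr (D ^ α)` as a lower bound. The rank-one projections onto the eigenbasis attain it.
-/

open Unitary Matrix

lemma sum_mul_rpow_le_rpow_mul_rpow {ι : Type*} (s : Finset ι) {α : ℝ} (hα : α ∈ Set.Ioc 0 1)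
    {w x : ι → ℝ} (hw : ∀ j, 0 ≤ w j) (hx : ∀ j, 0 ≤ x j) :
    ∑ j ∈ s, w j * x j ^ α ≤ (∑ j ∈ s, w j * x j) ^ α * (∑ j ∈ s, w j) ^ (1 - α) := by
  have holder := Real.inner_le_weight_mul_Lp_of_nonneg s ((one_le_inv₀ hα.1).2 hα.2) w
    (fun j ↦ x j ^ α) hw fun j ↦ Real.rpow_nonneg (hx j) α
  simpa only [inv_inv, Real.rpow_rpow_inv (hx _) hα.1.ne', mul_comm] using holder

lemma csInf_log_image_of_isLeast {s : Set ℝ} {a : ℝ} (hs : IsLeast s a) (ha : 0 < a) :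
    sInf (Real.log '' s) = Real.log a := by
  have hmono : MonotoneOn Real.log s :=
    Real.strictMonoOn_log.monotoneOn.mono fun _ hr ↦ ha.trans_le (hs.2 hr)
  exact (hmono.map_isLeast hs).csInf_eq

section ResolutionOfIdentity

variable {κ κ' A B : Type*} [Fintype κ] [Fintype κ'] [Semiring A] [Semiring B]

/-- A finite resolution of identity: a family of nonzero, pairwise orthogonal, self-adjoint
idempotents with sum `1`. -/
structure IsResolutionOfIdentity [Star A] (p : κ → A) : Prop
    extends CompleteOrthogonalIdempotents p where
  isSelfAdjoint : ∀ i, IsSelfAdjoint (p i)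
  ne_zero : ∀ i, p i ≠ 0

lemma isResolutionOfIdentity_iff [Star A] {p : κ → A} :
    IsResolutionOfIdentity p ↔ (∀ i, IsSelfAdjoint (p i)) ∧ (∀ i, p i * p i = p i) ∧
      (∀ i, p i ≠ 0) ∧ (∀ i j, i ≠ j → p i * p j = 0) ∧ ∑ i, p i = 1 :=
  ⟨fun h ↦ ⟨h.isSelfAdjoint, h.idem, h.ne_zero, fun _ _ hij ↦ h.ortho hij, h.complete⟩,
    fun ⟨hsa, hidem, hne, hortho, hsum⟩ ↦
      ⟨⟨⟨hidem, fun i j hij ↦ hortho i j hij⟩, hsum⟩, hsa, hne⟩⟩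

namespace IsResolutionOfIdentity

lemma isStarProjection [Star A] {p : κ → A} (hp : IsResolutionOfIdentity p) (i : κ) :
    IsStarProjection (p i) :=
  ⟨hp.idem i, hp.isSelfAdjoint i⟩

lemma comp_equiv [Star A] {p : κ → A} (hp : IsResolutionOfIdentity p) (e : κ' ≃ κ) :
    IsResolutionOfIdentity (p ∘ e) where
  toCompleteOrthogonalIdempotents :=
    (CompleteOrthogonalIdempotents.equiv e).2 hp.toCompleteOrthogonalIdempotents
  isSelfAdjoint i := hp.isSelfAdjoint (e i)
  ne_zero i := hp.ne_zero (e i)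

lemma map [Star A] [Star B] {p : κ → A} (hp : IsResolutionOfIdentity p) {F : Type*}
    [FunLike F A B] [RingHomClass F A B] [StarHomClass F A B] {f : F}
    (hf : Function.Injective f) : IsResolutionOfIdentity (f ∘ p) where
  toCompleteOrthogonalIdempotents :=
    hp.toCompleteOrthogonalIdempotents.map (f : A →+* B)
  isSelfAdjoint i := (hp.isSelfAdjoint i).map f
  ne_zero i := (map_ne_zero_iff f hf).2 (hp.ne_zero i)

lemma single_diag {ι R : Type*} [Fintype ι] [DecidableEq ι] [Semiring R] [StarRing R]
    [Nontrivial R] : IsResolutionOfIdentity fun i : ι ↦ single i i (1 : R) where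
  toCompleteOrthogonalIdempotents := by
    simpa only [Function.comp_def, diagonalRingHom_apply, diagonal_single] using
      (CompleteOrthogonalIdempotents.single fun _ : ι ↦ R).map (diagonalRingHom ι R)
  isSelfAdjoint i := by simp [IsSelfAdjoint, star_eq_conjTranspose]
  ne_zero i h := one_ne_zero (α := R) (by simpa using congrFun (congrFun h i) i)

open scoped MatrixOrder in
lemma posSemidef {ι 𝕜 : Type*} [Fintype ι] [DecidableEq ι] [RCLike 𝕜] {p : κ → Matrix ι ι 𝕜}
    (hp : IsResolutionOfIdentity p) (i : κ) : (p i).PosSemidef :=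
  nonneg_iff_posSemidef.1 (hp.isStarProjection i).nonneg

end IsResolutionOfIdentity

end ResolutionOfIdentity

variable {ι κ κ' 𝕜 : Type*} [Fintype ι] [Fintype κ] [Fintype κ'] [RCLike 𝕜]

section RenyiSum

/-- The sum `∑ i, tr(p i D)^α tr(p i)^(1-α)` attached to a family of matrices `p`. The traces are
real when the `p i` and `D` are Hermitian; the real parts only serve to make sense of the powers. -/
noncomputable def renyiSum (α : ℝ) (D : Matrix ι ι 𝕜) (p : κ → Matrix ι ι 𝕜) : ℝ :=
  ∑ i, RCLike.re (p i * D).trace ^ α * RCLike.re (p i).trace ^ (1 - α)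

lemma renyiSum_comp_equiv (α : ℝ) (D : Matrix ι ι 𝕜) (p : κ → Matrix ι ι 𝕜) (e : κ' ≃ κ) :
    renyiSum α D (p ∘ e) = renyiSum α D p :=
  e.sum_comp fun i ↦ RCLike.re (p i * D).trace ^ α * RCLike.re (p i).trace ^ (1 - α)

variable [DecidableEq ι]

lemma trace_conjStarAlgAut {R : Type*} [CommSemiring R] [StarRing R] (u : unitary (Matrix ι ι R))
    (a : Matrix ι ι R) : (conjStarAlgAut R _ u a).trace = a.trace := by
  rw [conjStarAlgAut_apply, trace_mul_comm, ← Matrix.mul_assoc, coe_star_mul_self, Matrix.one_mul]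

lemma renyiSum_conjStarAlgAut (α : ℝ) (D : Matrix ι ι 𝕜) (p : κ → Matrix ι ι 𝕜)
    (u : unitary (Matrix ι ι 𝕜)) :
    renyiSum α (conjStarAlgAut 𝕜 _ u D) (conjStarAlgAut 𝕜 _ u ∘ p) = renyiSum α D p := by
  simp only [renyiSum, Function.comp_apply, ← map_mul, trace_conjStarAlgAut]

lemma renyiSum_diagonal_single (α : ℝ) (l : ι → ℝ) :
    renyiSum α (diagonal (RCLike.ofReal ∘ l)) (fun i ↦ single i i (1 : 𝕜)) = ∑ i, l i ^ α := by
  simp [renyiSum, trace, mul_diagonal, single_apply]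

theorem sum_rpow_le_renyiSum_diagonal {α : ℝ} (hα : α ∈ Set.Ioc 0 1) {l : ι → ℝ}
    (hl : ∀ j, 0 ≤ l j) {p : κ → Matrix ι ι 𝕜} (hp : ∀ i, (p i).PosSemidef)
    (hsum : ∑ i, p i = 1) :
    ∑ j, l j ^ α ≤ renyiSum α (diagonal (RCLike.ofReal ∘ l)) p := by
  let w (i : κ) (j : ι) : ℝ := RCLike.re (p i j j)
  have w_nonneg (i j) : 0 ≤ w i j := by
    simpa [w] using (RCLike.le_iff_re_im.1 ((hp i).diag_nonneg (i := j))).1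
  have sum_w (j) : ∑ i, w i j = 1 := by
    have sum_diag : ∑ i, p i j j = 1 := by rw [← Matrix.sum_apply, hsum, one_apply_eq]
    simp only [w, ← map_sum, sum_diag, RCLike.one_re]
  have trace_eq (i) : RCLike.re (p i).trace = ∑ j, w i j := by simp [w, trace]
  have trace_mul_eq (i) :
      RCLike.re (p i * diagonal (RCLike.ofReal ∘ l)).trace = ∑ j, w i j * l j := by
    simp [w, trace, mul_diagonal]
  calc ∑ j, l j ^ α = ∑ j, (∑ i, w i j) * l j ^ α := by simp only [sum_w, one_mul]
    _ = ∑ i, ∑ j, w i j * l j ^ α := by simp only [Finset.sum_mul]; exact Finset.sum_comm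
    _ ≤ ∑ i, (∑ j, w i j * l j) ^ α * (∑ j, w i j) ^ (1 - α) :=
      Finset.sum_le_sum fun i _ ↦ sum_mul_rpow_le_rpow_mul_rpow _ hα (w_nonneg i) hl
    _ = renyiSum α (diagonal (RCLike.ofReal ∘ l)) p := by
      simp only [renyiSum, trace_eq, trace_mul_eq]

variable {D : Matrix ι ι 𝕜}

theorem sum_eigenvalues_rpow_le_renyiSum {α : ℝ} (hα : α ∈ Set.Ioc 0 1) (hD : D.PosSemidef)
    {p : κ → Matrix ι ι 𝕜} (hp : ∀ i, (p i).PosSemidef) (hsum : ∑ i, p i = 1) :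
    ∑ j, hD.1.eigenvalues j ^ α ≤ renyiSum α D p := by
  let u := hD.1.eigenvectorUnitary
  rw [← renyiSum_conjStarAlgAut α D p (star u), hD.1.conjStarAlgAut_star_eigenvectorUnitary]
  refine sum_rpow_le_renyiSum_diagonal hα hD.eigenvalues_nonneg (fun i ↦ ?_) ?_
  · rw [Function.comp_apply, conjStarAlgAut_star_apply]
    exact (hp i).conjTranspose_mul_mul_same _
  · simp only [Function.comp_apply, ← map_sum, hsum, map_one]

lemma sum_eigenvalues_rpow_pos (α : ℝ) (hD : D.PosSemidef) (hD0 : D ≠ 0) :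
    0 < ∑ i, hD.1.eigenvalues i ^ α := by
  obtain ⟨i, hi⟩ := Function.ne_iff.1 (hD.1.eigenvalues_eq_zero_iff.not.2 hD0)
  exact Finset.sum_pos' (fun j _ ↦ Real.rpow_nonneg (hD.eigenvalues_nonneg j) α)
    ⟨i, Finset.mem_univ i, Real.rpow_pos_of_pos ((hD.eigenvalues_nonneg i).lt_of_ne' hi) α⟩

/-- The rank-one projection onto the line spanned by the `i`-th vector of the eigenbasis of a
Hermitian matrix, encoded as the unitary conjugate of a diagonal matrix unit. -/
noncomputable def eigenprojection (hD : D.IsHermitian) (i : ι) : Matrix ι ι 𝕜 :=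
  conjStarAlgAut 𝕜 _ hD.eigenvectorUnitary (single i i 1)

lemma isResolutionOfIdentity_eigenprojection (hD : D.IsHermitian) :
    IsResolutionOfIdentity (eigenprojection hD) :=
  IsResolutionOfIdentity.single_diag.map (conjStarAlgAut 𝕜 _ hD.eigenvectorUnitary).injective

lemma renyiSum_eigenprojection (α : ℝ) (hD : D.IsHermitian) :
    renyiSum α D (eigenprojection hD) = ∑ i, hD.eigenvalues i ^ α := by
  rw [← renyiSum_conjStarAlgAut α D _ (star hD.eigenvectorUnitary),
    hD.conjStarAlgAut_star_eigenvectorUnitary, ← renyiSum_diagonal_single (𝕜 := 𝕜)]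
  congr 1
  ext1 i
  simp only [Function.comp_apply, eigenprojection, ← conjStarAlgAut_mul_apply, star_mul_self,
    map_one, StarAlgEquiv.one_apply]

end RenyiSum

/-- The set of values of `renyiSum α D` on finite resolutions of identity. The families are indexed
by `Fin k`, so that no quantification over types is needed. -/
def resolutionRenyiSums [DecidableEq ι] (α : ℝ) (D : Matrix ι ι 𝕜) : Set ℝ :=
  {r | ∃ (k : ℕ) (p : Fin k → Matrix ι ι 𝕜), IsResolutionOfIdentity p ∧ r = renyiSum α D p}

theorem isLeast_resolutionRenyiSums [DecidableEq ι] {α : ℝ} (hα : α ∈ Set.Ioc 0 1)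
    {D : Matrix ι ι 𝕜} (hD : D.PosSemidef) :
    IsLeast (resolutionRenyiSums α D) (∑ i, hD.1.eigenvalues i ^ α) := by
  constructor
  · let e := (Fintype.equivFin ι).symm
    exact ⟨_, eigenprojection hD.1 ∘ e, (isResolutionOfIdentity_eigenprojection hD.1).comp_equiv e,
      by rw [renyiSum_comp_equiv, renyiSum_eigenprojection]⟩
  · rintro _ ⟨k, p, hp, rfl⟩
    exact sum_eigenvalues_rpow_le_renyiSum hα hD hp.posSemidef hp.complete

theorem renyi_entropy_lt_one_resolution_variational_general [DecidableEq ι] {α : ℝ}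
    (hα : α ∈ Set.Ioo 0 1) {D : Matrix ι ι 𝕜} (hD : D.PosSemidef) (hD0 : D ≠ 0) :
    IsLeast (resolutionRenyiSums α D) (∑ i, hD.1.eigenvalues i ^ α) ∧
    (1 / (α - 1)) * Real.log (∑ i, hD.1.eigenvalues i ^ α) =
      (1 / (α - 1)) * sInf (Real.log '' resolutionRenyiSums α D) := by
  have hleast := isLeast_resolutionRenyiSums (Set.Ioo_subset_Ioc_self hα) hD
  exact ⟨hleast, by rw [csInf_log_image_of_isLeast hleast (sum_eigenvalues_rpow_pos α hD hD0)]⟩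

/-- Variational formula for `tr(D^α)`, `α ∈ (0,1)`, for a density matrix `D` (`D ≥ 0`,
`tr D = 1`): `tr(D^α)` is the minimum over finite resolutions of identity `(p_1,…,p_k)` of
`Σ_i tr(p_i D)^α tr(p_i)^{1−α}`; consequently, the Rényi entropy
`R_α = (1/(α−1)) log tr(D^α)` equals `(1/(α−1))` times the minimum of the logs of these sums.
Here `tr(D^α)` is expressed spectrally as `Σ_i λ_i^α` over the eigenvalues `λ_i` of `D`. -/
theorem renyi_entropy_lt_one_resolution_variational {n : ℕ} {α : ℝ}
    (hα : α ∈ Set.Ioo (0 : ℝ) 1)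
    (D : Matrix (Fin n) (Fin n) ℂ) (hD : D.PosSemidef) (htr : D.trace = 1) :
    IsLeast
      {r : ℝ | ∃ (k : ℕ) (p : Fin k → Matrix (Fin n) (Fin n) ℂ),
        (∀ i, (p i).IsHermitian) ∧ (∀ i, p i * p i = p i) ∧ (∀ i, p i ≠ 0) ∧
        (∀ i j, i ≠ j → p i * p j = 0) ∧ (∑ i, p i = 1) ∧
        r = ∑ i, (Matrix.trace (p i * D)).re ^ α * (Matrix.trace (p i)).re ^ (1 - α)}
      (∑ i, hD.1.eigenvalues i ^ α) ∧
    (1 / (α - 1)) * Real.log (∑ i, hD.1.eigenvalues i ^ α) =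
      (1 / (α - 1)) * sInf (Real.log ''
        {r : ℝ | ∃ (k : ℕ) (p : Fin k → Matrix (Fin n) (Fin n) ℂ),
          (∀ i, (p i).IsHermitian) ∧ (∀ i, p i * p i = p i) ∧ (∀ i, p i ≠ 0) ∧
          (∀ i j, i ≠ j → p i * p j = 0) ∧ (∑ i, p i = 1) ∧
          r = ∑ i, (Matrix.trace (p i * D)).re ^ α * (Matrix.trace (p i)).re ^ (1 - α)}) := by
  have hD0 : D ≠ 0 := by
    rintro rfl
    simp at htr
  simpa only [resolutionRenyiSums, isResolutionOfIdentity_iff, and_assoc, renyiSum,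
    isHermitian_iff_isSelfAdjoint, RCLike.re_to_complex] using
    renyi_entropy_lt_one_resolution_variational_general hα hD hD0
end

section
/- Let (X, 𝒜, μ) be a measure space with μ σ-finite, let α ∈ (0,1), and let ρ : X → [0,∞) be measurable with ∫ ρ dμ = 1 and ∫ ρ^α dμ < ∞. Then ∫ ρ^α dμ = inf over all countable measurable partitions (A_i)_{i∈ℕ} of X into sets of finite measure of Σ_i ω(A_i)^α μ(A_i)^{1−α}, where ω(A_i) = ∫_{A_i} ρ dμ and summands with μ(A_i) = 0 are taken to be 0. Consequently, the Rényi entropy R_α := (1/(α−1)) log ∫ ρ^α dμ equals (1/(α−1)) · inf over such partitions of log Σ_i ω(A_i)^α μ(A_i)^{1−α}. -/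
open MeasureTheory

/-!
On a cell `A` of finite measure, Jensen's inequality for the concave function `t ↦ t ^ α` gives
`∫_A ρ ^ α ≤ ω(A) ^ α μ(A) ^ (1 - α)`. If moreover `c ≤ ρ ≤ K c` on `A` for some `K > 1`, then
`ω(A) ^ α μ(A) ^ (1 - α) ≤ (K c) ^ α μ(A) ≤ K ^ α ∫_A ρ ^ α`. By σ-finiteness `X` can be
partitioned into cells of the second kind for every `K > 1`, and letting `K → 1` shows that the
lower bound is sharp. Since `∫ ρ ^ α > 0`, the logarithm commutes with the infimum.
-/

section PartitionSums

open Filter Set Topology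
open scoped NNRat

variable {X : Type*} [MeasurableSpace X] {μ : Measure X} {α K : ℝ} {ρ : X → ℝ} {s : Set X}

/-- A countable measurable partition `(A i)` of the whole space into sets of finite measure; cells
are allowed to be empty. -/
structure IsFiniteMeasurePartition (μ : Measure X) (A : ℕ → Set X) : Prop where
  measurableSet : ∀ i, MeasurableSet (A i)
  pairwise_disjoint : Pairwise (Function.onFun Disjoint A)
  iUnion_eq_univ : ⋃ i, A i = univ
  measure_lt_top : ∀ i, μ (A i) < ⊤

/-- The contribution `ω(s) ^ α μ(s) ^ (1 - α)` of a cell `s` to a partition sum, where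
`ω(s) = ∫ x in s, ρ x ∂μ`. For `α ∈ (0, 1)` it vanishes when `μ s = 0`. -/
noncomputable def cellWeight (μ : Measure X) (α : ℝ) (ρ : X → ℝ) (s : Set X) : ℝ :=
  (∫ x in s, ρ x ∂μ) ^ α * μ.real s ^ (1 - α)

/-- The set of all finite sums of cell weights `∑ i, ω(A i) ^ α μ(A i) ^ (1 - α)` over countable
partitions into sets of finite measure. Partitions with a divergent sum, whose value in the paper
is `∞`, contribute nothing. -/
def partitionSums (μ : Measure X) (α : ℝ) (ρ : X → ℝ) : Set ℝ :=
  {r | ∃ A, IsFiniteMeasurePartition μ A ∧ HasSum (fun i => cellWeight μ α ρ (A i)) r}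

lemma partitionSums_eq_setOf_tsum (μ : Measure X) (α : ℝ) (ρ : X → ℝ) :
    partitionSums μ α ρ = {r : ℝ | ∃ A : ℕ → Set X,
      (∀ i, MeasurableSet (A i)) ∧ Pairwise (Function.onFun Disjoint A) ∧
      (⋃ i, A i) = Set.univ ∧ (∀ i, μ (A i) < ⊤) ∧
      Summable (fun i => (∫ x in A i, ρ x ∂μ) ^ α * ((μ (A i)).toReal) ^ (1 - α)) ∧
      r = ∑' i, (∫ x in A i, ρ x ∂μ) ^ α * ((μ (A i)).toReal) ^ (1 - α)} := by
  ext r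
  constructor
  · rintro ⟨A, hA, hr⟩
    exact ⟨A, hA.measurableSet, hA.pairwise_disjoint, hA.iUnion_eq_univ, hA.measure_lt_top,
      hr.summable, hr.tsum_eq.symm⟩
  · rintro ⟨A, hmeas, hdisj, hcover, hfin, hsum, rfl⟩
    exact ⟨A, ⟨hmeas, hdisj, hcover, hfin⟩, hsum.hasSum⟩

lemma IsFiniteMeasurePartition.hasSum_setIntegral {E : Type*} [NormedAddCommGroup E]
    [NormedSpace ℝ E] {A : ℕ → Set X} (hA : IsFiniteMeasurePartition μ A) {f : X → E}
    (hf : Integrable f μ) : HasSum (fun i => ∫ x in A i, f x ∂μ) (∫ x, f x ∂μ) := by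
  simpa only [hA.iUnion_eq_univ, setIntegral_univ] using
    hasSum_integral_iUnion hA.measurableSet hA.pairwise_disjoint hf.integrableOn

lemma exists_isFiniteMeasurePartition_subset (μ : Measure X) [SigmaFinite μ] {ι : Type*}
    [Countable ι] [Nonempty ι] {B : ι → Set X} (hB : ∀ j, MeasurableSet (B j))
    (hcover : ⋃ j, B j = univ) :
    ∃ A, IsFiniteMeasurePartition μ A ∧ ∀ i, ∃ j, A i ⊆ B j := by
  obtain ⟨e, he⟩ := exists_surjective_nat (ι × ℕ)
  let C : ℕ → Set X := fun i => B (e i).1 ∩ spanningSets μ (e i).2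
  have hC_meas : ∀ i, MeasurableSet (C i) := fun i =>
    (hB _).inter (measurableSet_spanningSets μ _)
  have hC_cover : ⋃ i, C i = univ := by
    refine eq_univ_of_forall fun x => ?_
    obtain ⟨j, hj⟩ := iUnion_eq_univ_iff.1 hcover x
    obtain ⟨i, hi⟩ := he (j, spanningSetsIndex μ x)
    refine mem_iUnion.2 ⟨i, ?_⟩
    simpa only [C, hi] using ⟨hj, mem_spanningSetsIndex μ x⟩
  refine ⟨disjointed C, ⟨.disjointed hC_meas, disjoint_disjointed C, ?_, fun i => ?_⟩, fun i => ?_⟩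
  · rw [iUnion_disjointed, hC_cover]
  · exact (measure_mono ((disjointed_subset C i).trans inter_subset_right)).trans_lt
      (measure_spanningSets_lt_top μ _)
  · exact ⟨(e i).1, (disjointed_subset C i).trans inter_subset_left⟩

lemma exists_nnrat_mem_Icc_mul (hK : 1 < K) {x : ℝ} (hx : 0 ≤ x) :
    ∃ q : ℚ≥0, x ∈ Icc (q : ℝ) (K * q) := by
  have hK_pos : 0 < K := one_pos.trans hK
  obtain rfl | hx_pos := hx.eq_or_lt
  · exact ⟨0, by simp⟩
  · obtain ⟨q, hxq, hqx⟩ := exists_rat_btwn (div_lt_self hx_pos hK)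
    have hq : 0 ≤ q := mod_cast (div_nonneg hx hK_pos.le).trans hxq.le
    exact ⟨⟨q, hq⟩, hqx.le, ((div_lt_iff₀' hK_pos).1 hxq).le⟩

lemma exists_isFiniteMeasurePartition_ae_mem_Icc [SigmaFinite μ] (hρ : AEMeasurable ρ μ)
    (hρ_nonneg : 0 ≤ᵐ[μ] ρ) (hK : 1 < K) :
    ∃ A, IsFiniteMeasurePartition μ A ∧
      ∀ i, ∃ c : ℝ, 0 ≤ c ∧ ∀ᵐ x ∂μ.restrict (A i), ρ x ∈ Icc c (K * c) := by
  let f : X → ℝ := fun x => max (hρ.mk ρ x) 0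
  have hf : Measurable f := hρ.measurable_mk.max measurable_const
  have hρf : ρ =ᵐ[μ] f := by
    filter_upwards [hρ.ae_eq_mk, hρ_nonneg] with x hx hx_nonneg
    rw [← max_eq_left hx_nonneg, hx, Pi.zero_apply]
  obtain ⟨A, hA, hA_sub⟩ := exists_isFiniteMeasurePartition_subset μ
    (B := fun q : ℚ≥0 => f ⁻¹' Icc (q : ℝ) (K * q)) (fun q => hf measurableSet_Icc)
    (iUnion_eq_univ_iff.2 fun x => exists_nnrat_mem_Icc_mul hK (le_max_right _ _))
  refine ⟨A, hA, fun i => ?_⟩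
  obtain ⟨q, hq⟩ := hA_sub i
  refine ⟨q, q.cast_nonneg, ?_⟩
  filter_upwards [ae_restrict_of_ae hρf, ae_restrict_mem (hA.measurableSet i)] with x hx hxA
  exact hx ▸ hq hxA

lemma setIntegral_rpow_le_cellWeight (hα : α ∈ Icc (0 : ℝ) 1) (hs : μ s ≠ ⊤)
    (hρ_nonneg : 0 ≤ᵐ[μ.restrict s] ρ) (hρ : IntegrableOn ρ s μ)
    (hρα : IntegrableOn (fun x => ρ x ^ α) s μ) :
    ∫ x in s, ρ x ^ α ∂μ ≤ cellWeight μ α ρ s := by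
  have hω : 0 ≤ ∫ x in s, ρ x ∂μ := setIntegral_nonneg_of_ae_restrict hρ_nonneg
  obtain hs_zero | hs_pos := eq_or_ne (μ s) 0
  · rw [setIntegral_measure_zero _ hs_zero]
    unfold cellWeight
    positivity
  have hm : 0 < μ.real s := ENNReal.toReal_pos hs_pos hs
  have jensen : (μ.real s)⁻¹ * ∫ x in s, ρ x ^ α ∂μ ≤ ((μ.real s)⁻¹ * ∫ x in s, ρ x ∂μ) ^ α := by
    simpa only [setAverage_eq, smul_eq_mul] using
      (Real.concaveOn_rpow hα.1 hα.2).le_map_set_average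
        (Real.continuous_rpow_const hα.1).continuousOn isClosed_Ici hs_pos hs hρ_nonneg hρ hρα
  calc ∫ x in s, ρ x ^ α ∂μ
      ≤ μ.real s * ((μ.real s)⁻¹ * ∫ x in s, ρ x ∂μ) ^ α := (inv_mul_le_iff₀ hm).1 jensen
    _ = cellWeight μ α ρ s := by
      rw [cellWeight, Real.mul_rpow (by positivity) hω, Real.inv_rpow hm.le, Real.rpow_sub hm,
        Real.rpow_one]
      ring

lemma cellWeight_le_mul_setIntegral_rpow (hα : α ∈ Icc (0 : ℝ) 1) (hs : μ s ≠ ⊤) (hK : 0 ≤ K)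
    {c : ℝ} (hc : 0 ≤ c) (hρ_mem : ∀ᵐ x ∂μ.restrict s, ρ x ∈ Icc c (K * c))
    (hρα : IntegrableOn (fun x => ρ x ^ α) s μ) :
    cellWeight μ α ρ s ≤ K ^ α * ∫ x in s, ρ x ^ α ∂μ := by
  have hω : 0 ≤ ∫ x in s, ρ x ∂μ :=
    setIntegral_nonneg_of_ae_restrict (hρ_mem.mono fun x hx => hc.trans hx.1)
  have hω_le : ∫ x in s, ρ x ∂μ ≤ K * c * μ.real s :=
    (Real.le_norm_self _).trans <| norm_setIntegral_le_of_norm_le_const_ae hs.lt_top <|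
      hρ_mem.mono fun x hx => (Real.norm_of_nonneg (hc.trans hx.1)).trans_le hx.2
  have hcα : c ^ α * μ.real s ≤ ∫ x in s, ρ x ^ α ∂μ := by
    have := integral_mono_ae (integrableOn_const (C := c ^ α) hs) hρα
      (hρ_mem.mono fun x hx => Real.rpow_le_rpow hc hx.1 hα.1)
    rwa [setIntegral_const, smul_eq_mul, mul_comm] at this
  calc cellWeight μ α ρ s
      ≤ (K * c * μ.real s) ^ α * μ.real s ^ (1 - α) := by
        unfold cellWeight
        gcongr
        exact hα.1
    _ = K ^ α * (c ^ α * (μ.real s ^ α * μ.real s ^ (1 - α))) := by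
        rw [Real.mul_rpow (by positivity) (by positivity), Real.mul_rpow hK hc]
        ring
    _ = K ^ α * (c ^ α * μ.real s) := by
        rw [← Real.rpow_add_of_nonneg (by positivity) hα.1 (sub_nonneg.2 hα.2),
          add_sub_cancel, Real.rpow_one]
    _ ≤ K ^ α * ∫ x in s, ρ x ^ α ∂μ := by gcongr

lemma integral_rpow_mem_lowerBounds_partitionSums (hα : α ∈ Icc (0 : ℝ) 1)
    (hρ_nonneg : 0 ≤ᵐ[μ] ρ) (hρ : Integrable ρ μ) (hρα : Integrable (fun x => ρ x ^ α) μ) :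
    ∫ x, ρ x ^ α ∂μ ∈ lowerBounds (partitionSums μ α ρ) := by
  rintro r ⟨A, hA, hr⟩
  exact hasSum_le (fun i => setIntegral_rpow_le_cellWeight hα (hA.measure_lt_top i).ne
    (ae_restrict_of_ae hρ_nonneg) hρ.integrableOn hρα.integrableOn) (hA.hasSum_setIntegral hρα) hr

lemma exists_mem_partitionSums_le [SigmaFinite μ] (hα : α ∈ Icc (0 : ℝ) 1)
    (hρ_nonneg : 0 ≤ᵐ[μ] ρ) (hρ : AEMeasurable ρ μ) (hρα : Integrable (fun x => ρ x ^ α) μ)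
    (hK : 1 < K) : ∃ r ∈ partitionSums μ α ρ, r ≤ K ^ α * ∫ x, ρ x ^ α ∂μ := by
  obtain ⟨A, hA, hA_mem⟩ := exists_isFiniteMeasurePartition_ae_mem_Icc hρ hρ_nonneg hK
  have hle : ∀ i, cellWeight μ α ρ (A i) ≤ K ^ α * ∫ x in A i, ρ x ^ α ∂μ := fun i => by
    obtain ⟨c, hc, hmem⟩ := hA_mem i
    exact cellWeight_le_mul_setIntegral_rpow hα (hA.measure_lt_top i).ne (by positivity) hc hmem
      hρα.integrableOn
  have hnonneg : ∀ i, 0 ≤ cellWeight μ α ρ (A i) := fun i => by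
    have := setIntegral_nonneg_of_ae (s := A i) hρ_nonneg
    unfold cellWeight
    positivity
  have hsum := (hA.hasSum_setIntegral hρα).mul_left (K ^ α)
  have hsummable := hsum.summable.of_nonneg_of_le hnonneg hle
  exact ⟨_, ⟨A, hA, hsummable.hasSum⟩, hasSum_le hle hsummable.hasSum hsum⟩

lemma isGLB_partitionSums [SigmaFinite μ] (hα : α ∈ Icc (0 : ℝ) 1) (hρ_nonneg : 0 ≤ᵐ[μ] ρ)
    (hρ : Integrable ρ μ) (hρα : Integrable (fun x => ρ x ^ α) μ) :
    IsGLB (partitionSums μ α ρ) (∫ x, ρ x ^ α ∂μ) := by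
  refine ⟨integral_rpow_mem_lowerBounds_partitionSums hα hρ_nonneg hρ hρα, fun b hb => ?_⟩
  have hlim : Tendsto (fun K : ℝ => K ^ α * ∫ x, ρ x ^ α ∂μ) (𝓝[>] 1) (𝓝 (∫ x, ρ x ^ α ∂μ)) := by
    have hcont : Continuous fun K : ℝ => K ^ α * ∫ x, ρ x ^ α ∂μ :=
      (Real.continuous_rpow_const hα.1).mul_const _
    simpa only [Real.one_rpow, one_mul] using (hcont.tendsto 1).mono_left nhdsWithin_le_nhds
  refine ge_of_tendsto hlim ?_
  filter_upwards [self_mem_nhdsWithin] with K hK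
  obtain ⟨r, hr, hr_le⟩ := exists_mem_partitionSums_le hα hρ_nonneg hρ.aemeasurable hρα hK
  exact (hb hr).trans hr_le

lemma isGLB_image_log {S : Set ℝ} {a : ℝ} (ha : 0 < a) (hS : IsGLB S a) :
    IsGLB (Real.log '' S) (Real.log a) :=
  hS.isGLB_of_tendsto (Real.strictMonoOn_log.monotoneOn.mono fun _ hr => ha.trans_le (hS.1 hr))
    hS.nonempty ((Real.continuousAt_log ha.ne').tendsto.mono_left nhdsWithin_le_nhds)

lemma integral_rpow_pos (hρ_nonneg : 0 ≤ᵐ[μ] ρ) (hρ_pos : 0 < ∫ x, ρ x ∂μ)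
    (hρα : Integrable (fun x => ρ x ^ α) μ) : 0 < ∫ x, ρ x ^ α ∂μ := by
  have hρ : Integrable ρ μ := .of_integral_ne_zero hρ_pos.ne'
  have hρα_nonneg : 0 ≤ᵐ[μ] fun x => ρ x ^ α :=
    hρ_nonneg.mono fun x hx => Real.rpow_nonneg hx α
  rw [integral_pos_iff_support_of_nonneg_ae hρα_nonneg hρα]
  refine ((integral_pos_iff_support_of_nonneg_ae hρ_nonneg hρ).1 hρ_pos).trans_le
    (measure_mono_ae ?_)
  filter_upwards [hρ_nonneg] with x hx hx_supp
  exact (Real.rpow_pos_of_pos (lt_of_le_of_ne hx (Ne.symm hx_supp)) α).ne'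

theorem renyi_lt_one_partition_variational_general [SigmaFinite μ] (hα : α ∈ Ioo (0 : ℝ) 1)
    (hρ_nonneg : 0 ≤ᵐ[μ] ρ) (hρ_pos : 0 < ∫ x, ρ x ∂μ)
    (hρα : Integrable (fun x => ρ x ^ α) μ) :
    IsGLB (partitionSums μ α ρ) (∫ x, ρ x ^ α ∂μ) ∧
    (1 / (α - 1)) * Real.log (∫ x, ρ x ^ α ∂μ) =
      (1 / (α - 1)) * sInf (Real.log '' partitionSums μ α ρ) := by
  have hglb : IsGLB (partitionSums μ α ρ) (∫ x, ρ x ^ α ∂μ) :=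
    isGLB_partitionSums (Ioo_subset_Icc_self hα) hρ_nonneg
      (.of_integral_ne_zero hρ_pos.ne') hρα
  have hlog := isGLB_image_log (integral_rpow_pos hρ_nonneg hρ_pos hρα) hglb
  exact ⟨hglb, by rw [hlog.csInf_eq (hglb.nonempty.image _)]⟩

end PartitionSums

/-- Variational formula for `∫ ρ^α dμ`, `α ∈ (0,1)` (commutative Rényi entropy): for σ-finite
`μ` and a density `ρ ≥ 0` with `∫ ρ dμ = 1` and `ρ^α ∈ L¹(μ)`, `∫ ρ^α dμ` is the infimum,
over countable measurable partitions `(A_i)` of `X` into sets of finite measure, of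
`Σ_i ω(A_i)^α μ(A_i)^{1−α}` with `ω(A_i) = ∫_{A_i} ρ dμ` (summands with `μ(A_i) = 0` vanish
automatically since `0 ^ (1−α) = 0`); consequently the Rényi entropy
`R_α = (1/(α−1)) log ∫ ρ^α dμ` equals `(1/(α−1))` times the infimum of the logs of these sums. -/
theorem renyi_lt_one_partition_variational
    {X : Type*} [MeasurableSpace X] (μ : Measure X) [SigmaFinite μ] {α : ℝ}
    (hα : α ∈ Set.Ioo (0 : ℝ) 1)
    (ρ : X → ℝ) (hρ_meas : Measurable ρ) (hρ_nonneg : ∀ x, 0 ≤ ρ x)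
    (hρ_int : ∫ x, ρ x ∂μ = 1)
    (hρα_int : Integrable (fun x => ρ x ^ α) μ) :
    IsGLB
      {r : ℝ | ∃ A : ℕ → Set X,
        (∀ i, MeasurableSet (A i)) ∧ Pairwise (Function.onFun Disjoint A) ∧
        (⋃ i, A i) = Set.univ ∧ (∀ i, μ (A i) < ⊤) ∧
        Summable (fun i => (∫ x in A i, ρ x ∂μ) ^ α * ((μ (A i)).toReal) ^ (1 - α)) ∧
        r = ∑' i, (∫ x in A i, ρ x ∂μ) ^ α * ((μ (A i)).toReal) ^ (1 - α)}
      (∫ x, ρ x ^ α ∂μ) ∧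
    (1 / (α - 1)) * Real.log (∫ x, ρ x ^ α ∂μ) =
      (1 / (α - 1)) * sInf (Real.log ''
        {r : ℝ | ∃ A : ℕ → Set X,
          (∀ i, MeasurableSet (A i)) ∧ Pairwise (Function.onFun Disjoint A) ∧
          (⋃ i, A i) = Set.univ ∧ (∀ i, μ (A i) < ⊤) ∧
          Summable (fun i => (∫ x in A i, ρ x ∂μ) ^ α * ((μ (A i)).toReal) ^ (1 - α)) ∧
          r = ∑' i, (∫ x in A i, ρ x ∂μ) ^ α * ((μ (A i)).toReal) ^ (1 - α)}) := by
  rw [← partitionSums_eq_setOf_tsum]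
  exact renyi_lt_one_partition_variational_general hα (.of_forall hρ_nonneg)
    (hρ_int ▸ one_pos) hρα_int
end
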